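/- Let a be an additive and positive parametric sequence, J ≥ 2, θ ∈ (0,∞)^J, p a pmf on ℕ, and let P be the convolution splitting distribution P(y) = p(|y|)·∏_{j=1}^{J} a_{θ_j}(y_j)/a_{|θ|}(|y|) on ℕ^J. Let I be a nonempty proper subset of {1,…,J}, fix w : ({1,…,J}∖I) → ℕ with δ = ∑_{j∉I} w_j, and suppose the normalizer Z = ∑_{m≥0} a_{|θ_I|}(m)·p(m+δ)/a_{|θ|}(m+δ) is positive. Then for every z : I → ℕ, the conditional distribution of the subvector indexed by I given the complementary subvector equals w satisfies (∑_{y : y_j = z_j (j∈I), y_j = w_j (j∉I)} P(y)) / (∑_{y : y_j = w_j (j∉I)} P(y)) = (∏_{j∈I} a_{θ_j}(z_j))·(p(|z|+δ)/a_{|θ|}(|z|+δ)) / Z, where |z| = ∑_{j∈I} z_j and |θ_I| = ∑_{j∈I} θ_j. -/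

import Mathlib

/-!
On the slice `{y | y = w off I}` the mass `P y` is the constant `C = ∏_{j ∉ I} a_{θ_j}(w_j)` times
`(∏_{j ∈ I} a_{θ_j}(y_j)) * g(∑_{j ∈ I} y_j)` with `g m = p (m + δ) / a_{|θ|}(m + δ)`, so `C`
cancels in the conditional probability and the normalizer is the sum of this kernel over the slice.
Additivity says that the generating series `∑ₙ a_θ(n) Xⁿ` turn sums of parameters into products;
hence the product weights of total `m` add up to `a_{|θ_I|}(m)`, and grouping the slice by total
gives `Z`.
-/

open Finset

section FiberSums

variable {α β : Type*}

theorem hasSum_mul_comp_of_hasSum_fiber {r : α → β} {c : α → ℝ} (hc : ∀ x, 0 ≤ c x)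
    {A g : β → ℝ} {Z : ℝ} (hA : ∀ b, HasSum (fun x : r ⁻¹' {b} ↦ c x) (A b))
    (hZ : HasSum (fun b ↦ A b * g b) Z) :
    HasSum (fun x ↦ c x * g (r x)) Z := by
  have fiber_sum (h : β → ℝ) (b : β) :
      HasSum (fun x : r ⁻¹' {b} ↦ c x * h (r x)) (A b * h b) := by
    have map_eq (x : r ⁻¹' {b}) : r x = b := x.2
    simpa only [map_eq] using (hA b).mul_right (h b)
  have A_nonneg (b : β) : 0 ≤ A b := (hA b).nonneg fun _ ↦ hc _
  have summable_abs : Summable fun x ↦ c x * |g (r x)| := by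
    rw [summable_partition (fun x ↦ mul_nonneg (hc x) (abs_nonneg _)) (s := fun b ↦ r ⁻¹' {b})
      (fun x ↦ ⟨r x, rfl, fun _ hb ↦ hb.symm⟩)]
    refine ⟨fun b ↦ (fiber_sum (fun b ↦ |g b|) b).summable, ?_⟩
    simpa only [(fiber_sum (fun b ↦ |g b|) _).tsum_eq, abs_mul, abs_of_nonneg (A_nonneg _)]
      using hZ.summable.abs
  have summable_mul : Summable fun x ↦ c x * g (r x) := by
    refine .of_abs ?_
    simpa only [abs_mul, abs_of_nonneg (hc _)] using summable_abs
  have hasSum_fiberwise := summable_mul.hasSum.tsum_fiberwise r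
  simp only [(fiber_sum g _).tsum_eq] at hasSum_fiberwise
  exact hasSum_fiberwise.unique hZ ▸ summable_mul.hasSum

end FiberSums

section AdditiveSequences

variable {M R κ : Type*} [AddCommMonoid M] [PartialOrder M]

/-- An additive parametric sequence: convolving the members at two positive parameters gives the
member at their sum. Members at parameters that are not positive are unconstrained. -/
def IsAdditiveSequence [Semiring R] (a : M → ℕ → R) : Prop :=
  ∀ θ θ' : M, 0 < θ → 0 < θ' → ∀ n : ℕ,
    ∑ y ∈ range (n + 1), a θ y * a θ' (n - y) = a (θ + θ') n

/-- A positive parametric sequence: all terms of the members at positive parameters are positive. -/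
def IsPositiveSequence [Zero R] [LT R] (a : M → ℕ → R) : Prop :=
  ∀ θ : M, 0 < θ → ∀ y : ℕ, 0 < a θ y

namespace IsAdditiveSequence

theorem mk_mul_mk [Semiring R] {a : M → ℕ → R} (ha : IsAdditiveSequence a) {θ θ' : M}
    (hθ : 0 < θ) (hθ' : 0 < θ') :
    PowerSeries.mk (a θ) * PowerSeries.mk (a θ') = PowerSeries.mk (a (θ + θ')) := by
  ext n
  rw [PowerSeries.coeff_mul, Nat.sum_antidiagonal_eq_sum_range_succ_mk]
  simpa only [PowerSeries.coeff_mk] using ha θ θ' hθ hθ' n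

variable [IsOrderedCancelAddMonoid M]

theorem prod_mk [CommSemiring R] {a : M → ℕ → R} (ha : IsAdditiveSequence a) {θ : κ → M}
    {s : Finset κ} (hs : s.Nonempty) (hθ : ∀ j ∈ s, 0 < θ j) :
    ∏ j ∈ s, PowerSeries.mk (a (θ j)) = PowerSeries.mk (a (∑ j ∈ s, θ j)) := by
  induction hs using Finset.Nonempty.cons_induction with
  | singleton i => simp only [prod_singleton, sum_singleton]
  | cons i s _ hs ih =>
    rw [forall_mem_cons] at hθ
    rw [prod_cons, sum_cons, ih hθ.2, ha.mk_mul_mk hθ.1 (sum_pos hθ.2 hs)]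

variable [Fintype κ] [Nonempty κ]

theorem sum_piAntidiag_prod [DecidableEq κ] [CommSemiring R] {a : M → ℕ → R}
    (ha : IsAdditiveSequence a) {θ : κ → M} (hθ : ∀ j, 0 < θ j) (n : ℕ) :
    ∑ u ∈ piAntidiag univ n, ∏ j, a (θ j) (u j) = a (∑ j, θ j) n := by
  have coeff_eq := congrArg (PowerSeries.coeff n) (ha.prod_mk univ_nonempty fun j _ ↦ hθ j)
  simp only [PowerSeries.coeff_prod, PowerSeries.coeff_mk] at coeff_eq
  rw [← coeff_eq]
  refine (sum_equiv Finsupp.equivFunOnFinite (fun l ↦ ?_) fun l _ ↦ rfl).symm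
  simp

theorem hasSum_prod_mul_comp_sum {a : M → ℕ → ℝ} (ha : IsAdditiveSequence a)
    {θ : κ → M} (hθ : ∀ j, 0 < θ j) (ha_nonneg : ∀ j n, 0 ≤ a (θ j) n) {g : ℕ → ℝ} {Z : ℝ}
    (hZ : HasSum (fun m ↦ a (∑ j, θ j) m * g m) Z) :
    HasSum (fun u : κ → ℕ ↦ (∏ j, a (θ j) (u j)) * g (∑ j, u j)) Z := by
  classical
  refine hasSum_mul_comp_of_hasSum_fiber (r := fun u : κ → ℕ ↦ ∑ j, u j)
    (fun u ↦ prod_nonneg fun j _ ↦ ha_nonneg j (u j)) (fun m ↦ ?_) hZ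
  have fiber_eq : (fun u : κ → ℕ ↦ ∑ j, u j) ⁻¹' {m} = ↑(piAntidiag (univ : Finset κ) m) := by
    ext u
    simp
  rw [fiber_eq, ← ha.sum_piAntidiag_prod hθ]
  exact (piAntidiag univ m).hasSum fun u ↦ ∏ j, a (θ j) (u j)

end IsAdditiveSequence

end AdditiveSequences

section Slices

variable {ι β : Type*} [DecidableEq ι]

/-- Restriction to `I` identifies the slice of functions that agree with `w` off `I` with the
functions on `I`. -/
def sliceEquiv (I : Finset ι) (w : ι → β) : {y : ι → β // ∀ j ∉ I, y j = w j} ≃ (I → β) where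
  toFun y j := y.1 j
  invFun u := ⟨fun j ↦ if hj : j ∈ I then u ⟨j, hj⟩ else w j, fun _ hj ↦ dif_neg hj⟩
  left_inv := by
    rintro ⟨y, hy⟩
    ext j
    by_cases hj : j ∈ I <;> simp [hj, hy]
  right_inv u := by
    ext j
    simp

theorem tsum_subtype_eq_and_eq_compl {R : Type*} [AddCommMonoid R] [TopologicalSpace R]
    (I : Finset ι) (z w : ι → β) (f : (ι → β) → R) :
    ∑' y : {y : ι → β // (∀ j ∈ I, y j = z j) ∧ ∀ j ∉ I, y j = w j}, f y = f (I.piecewise z w) := by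
  have slice_eq : {y : ι → β | (∀ j ∈ I, y j = z j) ∧ ∀ j ∉ I, y j = w j} = {I.piecewise z w} := by
    ext y
    simp only [Set.mem_ofPred_eq, Set.mem_singleton_iff, funext_iff, ← forall_and]
    refine forall_congr' fun j ↦ ?_
    by_cases hj : j ∈ I <;> simp [hj]
  exact (tsum_congr_set_coe f slice_eq).trans (tsum_singleton _ f)

end Slices

section ConvolutionSplitting

variable {M ι : Type*} [AddCommMonoid M] [Fintype ι]

/-- The convolution splitting weights: the total is weighted by `p` and split into components with
weights proportional to `∏ j, a (θ j) (y j)`. They form a distribution when `p` is a probability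
mass function and `a` is additive and positive, but `p` may be any real sequence here. -/
noncomputable def convolutionSplitting (a : M → ℕ → ℝ) (θ : ι → M) (p : ℕ → ℝ) (y : ι → ℕ) : ℝ :=
  p (∑ j, y j) * (∏ j, a (θ j) (y j)) / a (∑ j, θ j) (∑ j, y j)

variable [DecidableEq ι] {a : M → ℕ → ℝ} {θ : ι → M} {p : ℕ → ℝ} {I : Finset ι} {w : ι → ℕ}

theorem convolutionSplitting_of_eq_compl {y : ι → ℕ} (hy : ∀ j ∉ I, y j = w j) :
    convolutionSplitting a θ p y =
      (∏ j ∈ Iᶜ, a (θ j) (w j)) * ((∏ j ∈ I, a (θ j) (y j)) *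
        (p (∑ j ∈ I, y j + ∑ j ∈ Iᶜ, w j) / a (∑ j, θ j) (∑ j ∈ I, y j + ∑ j ∈ Iᶜ, w j))) := by
  have sum_eq : ∑ j, y j = ∑ j ∈ I, y j + ∑ j ∈ Iᶜ, w j := by
    rw [← sum_add_sum_compl I, sum_congr rfl fun j hj ↦ hy j (mem_compl.1 hj)]
  have prod_eq : ∏ j, a (θ j) (y j) = (∏ j ∈ I, a (θ j) (y j)) * ∏ j ∈ Iᶜ, a (θ j) (w j) := by
    rw [← prod_mul_prod_compl I]
    exact congrArg _ (prod_congr rfl fun j hj ↦ by rw [hy j (mem_compl.1 hj)])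
  rw [convolutionSplitting, sum_eq, prod_eq]
  ring

theorem tsum_convolutionSplitting_eq_and_eq_compl (z : ι → ℕ) :
    ∑' y : {y : ι → ℕ // (∀ j ∈ I, y j = z j) ∧ ∀ j ∉ I, y j = w j},
        convolutionSplitting a θ p y =
      (∏ j ∈ Iᶜ, a (θ j) (w j)) * ((∏ j ∈ I, a (θ j) (z j)) *
        (p (∑ j ∈ I, z j + ∑ j ∈ Iᶜ, w j) / a (∑ j, θ j) (∑ j ∈ I, z j + ∑ j ∈ Iᶜ, w j))) := by
  have piecewise_eq (j : ι) (hj : j ∈ I) : I.piecewise z w j = z j := piecewise_eq_of_mem _ _ _ hj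
  rw [tsum_subtype_eq_and_eq_compl,
    convolutionSplitting_of_eq_compl fun j ↦ piecewise_eq_of_notMem I z w,
    sum_congr rfl piecewise_eq, prod_congr (s₁ := I) rfl fun j hj ↦ by rw [piecewise_eq j hj]]

variable [PartialOrder M] [IsOrderedCancelAddMonoid M]

theorem hasSum_convolutionSplitting_eq_compl (ha : IsAdditiveSequence a)
    (hθ : ∀ j ∈ I, 0 < θ j) (ha_nonneg : ∀ j ∈ I, ∀ n, 0 ≤ a (θ j) n) (hI : I.Nonempty) {Z : ℝ}
    (hZ : HasSum (fun m ↦ a (∑ j ∈ I, θ j) m * p (m + ∑ j ∈ Iᶜ, w j) /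
      a (∑ j, θ j) (m + ∑ j ∈ Iᶜ, w j)) Z) :
    HasSum (fun y : {y : ι → ℕ // ∀ j ∉ I, y j = w j} ↦ convolutionSplitting a θ p y)
      ((∏ j ∈ Iᶜ, a (θ j) (w j)) * Z) := by
  have : Nonempty I := hI.to_subtype
  simp only [mul_div_assoc, ← sum_coe_sort I θ] at hZ
  have sum_kernel := ha.hasSum_prod_mul_comp_sum (fun j : I ↦ hθ j j.2) (fun j ↦ ha_nonneg j j.2)
    (g := fun m ↦ p (m + ∑ j ∈ Iᶜ, w j) / a (∑ j, θ j) (m + ∑ j ∈ Iᶜ, w j)) hZ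
  refine (((sliceEquiv I w).hasSum_iff.2 sum_kernel).mul_left _).congr_fun fun y ↦ ?_
  rw [convolutionSplitting_of_eq_compl y.2, ← sum_coe_sort I y.1,
    ← prod_coe_sort I fun j ↦ a (θ j) (y.1 j)]
  rfl

theorem conditional_subvector_given_complement_of_convolution_splitting_general
    (ha_pos : IsPositiveSequence a) (ha : IsAdditiveSequence a) (hθ : ∀ j, 0 < θ j)
    (hI : I.Nonempty)
    (hZ : ∑' m : ℕ, a (∑ j ∈ I, θ j) m * p (m + ∑ j ∈ Iᶜ, w j) /
      a (∑ j, θ j) (m + ∑ j ∈ Iᶜ, w j) ≠ 0) (z : ι → ℕ) :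
    (∑' y : {y : ι → ℕ // (∀ j ∈ I, y j = z j) ∧ ∀ j ∉ I, y j = w j},
          convolutionSplitting a θ p y)
        / (∑' y : {y : ι → ℕ // ∀ j ∉ I, y j = w j}, convolutionSplitting a θ p y)
      = (∏ j ∈ I, a (θ j) (z j))
          * (p (∑ j ∈ I, z j + ∑ j ∈ Iᶜ, w j) / a (∑ j, θ j) (∑ j ∈ I, z j + ∑ j ∈ Iᶜ, w j))
          / ∑' m : ℕ, a (∑ j ∈ I, θ j) m * p (m + ∑ j ∈ Iᶜ, w j) /
              a (∑ j, θ j) (m + ∑ j ∈ Iᶜ, w j) := by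
  have hasSum_normalizer := (not_imp_comm.1 tsum_eq_zero_of_not_summable hZ).hasSum
  have hasSum_slice := hasSum_convolutionSplitting_eq_compl ha (fun j _ ↦ hθ j)
    (fun j _ n ↦ (ha_pos _ (hθ j) n).le) hI hasSum_normalizer
  have complement_pos : 0 < ∏ j ∈ Iᶜ, a (θ j) (w j) := prod_pos fun j _ ↦ ha_pos _ (hθ j) _
  rw [tsum_convolutionSplitting_eq_and_eq_compl, hasSum_slice.tsum_eq,
    mul_div_mul_left _ _ complement_pos.ne']

end ConvolutionSplitting

/-- the conditional distribution of the subvector indexed by `I` given the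
complementary subvector, for a convolution splitting distribution. With `δ = ∑_{j∉I} w j`, and
normalizer `Z = ∑_{m≥0} a |θ_I| m * p (m+δ) / a |θ| (m+δ) > 0`, for every `z`,
`P(Y_I = z | Y_{-I} = w) = (∏_{j∈I} a (θ j) (z j)) * (p (|z|+δ) / a |θ| (|z|+δ)) / Z`. -/
theorem conditional_subvector_given_complement_of_convolution_splitting
    (a : ℝ → ℕ → ℝ)
    (ha_pos : ∀ θ : ℝ, 0 < θ → ∀ y : ℕ, 0 < a θ y)
    (ha_add : ∀ θ θ' : ℝ, 0 < θ → 0 < θ' → ∀ n : ℕ,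
      ∑ y ∈ Finset.range (n + 1), a θ y * a θ' (n - y) = a (θ + θ') n)
    (J : ℕ) (hJ : 2 ≤ J) (θ : Fin J → ℝ) (hθ : ∀ j, 0 < θ j)
    (p : ℕ → ℝ) (hp0 : ∀ n, 0 ≤ p n) (hp1 : ∑' n : ℕ, p n = 1)
    (P : (Fin J → ℕ) → ℝ)
    (hP : ∀ y : Fin J → ℕ,
      P y = p (∑ j, y j) * (∏ j, a (θ j) (y j)) / a (∑ j, θ j) (∑ j, y j))
    (I : Finset (Fin J)) (hI : I.Nonempty) (hI' : I ≠ Finset.univ)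
    (w : Fin J → ℕ) (δ : ℕ) (hδ : δ = ∑ j ∈ Iᶜ, w j)
    (Z : ℝ)
    (hZdef : Z = ∑' m : ℕ, a (∑ j ∈ I, θ j) m * p (m + δ) / a (∑ j, θ j) (m + δ))
    (hZ : 0 < Z) :
    ∀ z : Fin J → ℕ,
      (∑' y : {y : Fin J → ℕ // (∀ j ∈ I, y j = z j) ∧ ∀ j ∉ I, y j = w j}, P y.val)
          / (∑' y : {y : Fin J → ℕ // ∀ j ∉ I, y j = w j}, P y.val)
        = (∏ j ∈ I, a (θ j) (z j))
            * (p ((∑ j ∈ I, z j) + δ) / a (∑ j, θ j) ((∑ j ∈ I, z j) + δ)) / Z := by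
  obtain rfl : P = convolutionSplitting a θ p := funext hP
  subst hδ hZdef
  exact conditional_subvector_given_complement_of_convolution_splitting_general
    ha_pos ha_add hθ hI hZ.ne'
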